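/- The integral of (log(2 sin(πu)))² over u from 0 to 1/2 equals π²/24. -/

import Mathlib

open Real

open Filter MeasureTheory Set Topology

/-!
The function `log (1 - z) ^ 2` is holomorphic on the unit disc and vanishes at `0`, and its
singularity at `1` is mild enough for the mean value property to hold on the unit circle itself: its
average there is `0`. Since `1 - exp (2 i x) = 2 sin x * exp (i (x - π / 2))`, its real part at
`exp (2 i x)` is `log (2 sin x) ^ 2 - (x - π / 2) ^ 2` for `0 < x < π`, so `log (2 sin x) ^ 2` has
the same integral over `(0, π)` as the polynomial `(x - π / 2) ^ 2`.
-/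

theorem intervalIntegrable_log_pow (n : ℕ) (a b : ℝ) :
    IntervalIntegrable (fun x ↦ Real.log x ^ n) volume a b := by
  refine intervalIntegrable_of_even (fun x ↦ by rw [Real.log_neg_eq_log]) fun t ht ↦ ?_
  have h_isBigO : (fun x ↦ Real.log x ^ n) =O[𝓝[>] 0] fun x ↦ x ^ (-(1 / 2) : ℝ) := by
    have h_isLittleO := isLittleO_abs_log_rpow_rpow_nhdsGT_zero (s := -(1 / 2)) n (by norm_num)
    simpa only [rpow_natCast, ← abs_pow, Asymptotics.isBigO_abs_left] using h_isLittleO.isBigO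
  have h_rpow : IntegrableAtFilter (fun x : ℝ ↦ x ^ (-(1 / 2) : ℝ)) (𝓝[>] 0) volume :=
    ⟨Ioc 0 1, Ioc_mem_nhdsGT one_pos, (intervalIntegrable_iff_integrableOn_Ioc_of_le zero_le_one).1
      (intervalIntegral.intervalIntegrable_rpow' (by norm_num))⟩
  have h_meas : Measurable fun x ↦ Real.log x ^ n := by fun_prop
  obtain ⟨s, hs, hs_int⟩ := h_isBigO.integrableAtFilter
    h_meas.stronglyMeasurable.stronglyMeasurableAtFilter h_rpow
  obtain ⟨ε, hε, hεs⟩ := mem_nhdsGT_iff_exists_Ioc_subset.1 hs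
  have h_left : IntervalIntegrable (fun x ↦ Real.log x ^ n) volume 0 ε :=
    (intervalIntegrable_iff_integrableOn_Ioc_of_le hε.out.le).2 (hs_int.mono_set hεs)
  refine h_left.trans (ContinuousOn.intervalIntegrable ?_)
  refine (Real.continuousOn_log.mono fun x hx ↦ ?_).pow n
  exact ((lt_min hε ht).trans_le hx.1).ne'

theorem abs_log_sin_le_abs_log_two_div_pi_mul {x : ℝ} (hx : |x| ≤ π / 2) (hx0 : x ≠ 0) :
    |Real.log (Real.sin x)| ≤ |Real.log (2 / π * x)| := by
  have h_jordan : |2 / π * x| ≤ |Real.sin x| := by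
    rw [abs_mul, abs_of_pos (by positivity : 0 < 2 / π)]
    exact mul_abs_le_abs_sin hx
  have h_pos : 0 < |2 / π * x| := by positivity
  have h_log := Real.log_le_log h_pos h_jordan
  rw [Real.log_abs, Real.log_abs] at h_log
  have h_nonpos : Real.log (Real.sin x) ≤ 0 := by
    rw [← Real.log_abs]
    exact Real.log_nonpos (abs_nonneg _) (Real.abs_sin_le_one x)
  exact abs_le_abs_of_nonpos h_nonpos h_log

theorem intervalIntegrable_log_sin_pow (n : ℕ) (a b : ℝ) :
    IntervalIntegrable (fun x ↦ Real.log (Real.sin x) ^ n) volume a b := by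
  have h_periodic : Function.Periodic (fun x ↦ Real.log (Real.sin x) ^ n) π := fun x ↦ by
    simp only [Real.sin_add_pi, Real.log_neg_eq_log]
  have h_meas : Measurable fun x ↦ Real.log (Real.sin x) ^ n := by fun_prop
  refine h_periodic.intervalIntegrable pi_ne_zero (t := -(π / 2)) ?_ a b
  have h_bound : IntervalIntegrable (fun x ↦ ‖Real.log (2 / π * x) ^ n‖) volume (-(π / 2))
      (-(π / 2) + π) := by
    have h_scaled := (intervalIntegrable_log_pow n (2 / π * (-(π / 2)))
      (2 / π * (-(π / 2) + π))).comp_mul_left (c := 2 / π)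
    simp only [mul_div_cancel_left₀ _ (by positivity : 2 / π ≠ 0)] at h_scaled
    exact h_scaled.norm
  refine h_bound.mono_fun' h_meas.aestronglyMeasurable ?_
  filter_upwards [ae_restrict_mem measurableSet_uIoc, Measure.ae_ne _ 0] with x hx hx0
  rw [uIoc_of_le (by linarith [pi_pos])] at hx
  simp only [norm_pow, Real.norm_eq_abs]
  have h_abs : |x| ≤ π / 2 := abs_le.2 ⟨hx.1.le, by linarith [hx.2]⟩
  exact pow_le_pow_left₀ (abs_nonneg _) (abs_log_sin_le_abs_log_two_div_pi_mul h_abs hx0) n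

theorem circleAverage_eq_of_dominated {E : Type*} [NormedAddCommGroup E] [NormedSpace ℂ E]
    [CompleteSpace E] {f : ℂ → E} {c : ℂ} {R : ℝ} {bound : ℝ → ℝ} (hR : 0 < R)
    (hf : DifferentiableOn ℂ f (Metric.ball c R))
    (h_int : IntervalIntegrable bound volume 0 (2 * π))
    (h_bound : ∀ᶠ r in 𝓝[<] R, ∀ᵐ θ, ‖f (circleMap c r θ)‖ ≤ bound θ)
    (h_lim : ∀ᵐ θ, Tendsto (fun r ↦ f (circleMap c r θ)) (𝓝[<] R) (𝓝 (f (circleMap c R θ)))) :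
    circleAverage f c R = f c := by
  have h_mem : ∀ᶠ r in 𝓝[<] R, r ∈ Ioo 0 R := Ioo_mem_nhdsLT hR
  have h_mean : ∀ᶠ r in 𝓝[<] R, circleAverage f c r = f c := by
    filter_upwards [h_mem] with r hr
    refine (hf.mono ?_).diffContOnCl.circleAverage
    rw [abs_of_pos hr.1]
    exact Metric.closure_ball_subset_closedBall.trans (Metric.closedBall_subset_ball hr.2)
  have h_tendsto : Tendsto (fun r ↦ circleAverage f c r) (𝓝[<] R) (𝓝 (circleAverage f c R)) := by
    refine Tendsto.const_smul (intervalIntegral.tendsto_integral_filter_of_dominated_convergence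
      bound ?_ ?_ h_int ?_) _
    · filter_upwards [h_mem] with r hr
      refine (hf.continuousOn.comp_continuous (continuous_circleMap c r) fun θ ↦ ?_)
        |>.aestronglyMeasurable
      simpa [circleMap, abs_of_pos hr.1] using hr.2
    · exact h_bound.mono fun r hr ↦ hr.mono fun θ hθ _ ↦ hθ
    · exact h_lim.mono fun θ hθ _ ↦ hθ
  exact tendsto_nhds_unique h_tendsto (tendsto_const_nhds.congr' (h_mean.mono fun r hr ↦ hr.symm))

theorem one_sub_circleMap_two_mul (x : ℝ) :
    1 - circleMap 0 1 (2 * x) = circleMap 0 (2 * Real.sin x) (x - π / 2) := by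
  apply Complex.ext
  · rw [Complex.sub_re, Complex.one_re, circleMap_zero_re, circleMap_zero_re,
      Real.cos_sub_pi_div_two, Real.cos_two_mul_eq_one_sub]
    ring
  · rw [Complex.sub_im, Complex.one_im, circleMap_zero_im, circleMap_zero_im,
      Real.sin_sub_pi_div_two, Real.sin_two_mul]
    ring

theorem log_circleMap_zero {r θ : ℝ} (hr : 0 < r) (hθ : θ ∈ Ioc (-π) π) :
    Complex.log (circleMap 0 r θ) = Real.log r + θ * Complex.I := by
  rw [circleMap_zero, Complex.log_ofReal_mul hr (Complex.exp_ne_zero _), Complex.log_exp]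
  · simpa using hθ.1
  · simpa using hθ.2

theorem re_log_one_sub_circleMap_two_mul_sq {x : ℝ} (hx : x ∈ Ioo 0 π) :
    (Complex.log (1 - circleMap 0 1 (2 * x)) ^ 2).re =
      Real.log (2 * Real.sin x) ^ 2 - (x - π / 2) ^ 2 := by
  have h_pos : 0 < 2 * Real.sin x := mul_pos two_pos (Real.sin_pos_of_mem_Ioo hx)
  have h_arg : x - π / 2 ∈ Ioc (-π) π := ⟨by linarith [hx.1, pi_pos], by linarith [hx.2, pi_pos]⟩
  rw [one_sub_circleMap_two_mul, log_circleMap_zero h_pos h_arg, sq, Complex.mul_re]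
  simp only [Complex.add_re, Complex.add_im, Complex.re_ofReal_mul, Complex.im_ofReal_mul,
    Complex.ofReal_re, Complex.ofReal_im, Complex.I_re, Complex.I_im]
  ring

theorem one_sub_mem_slitPlane {z : ℂ} (hz : ‖z‖ ≤ 1) (hz1 : z ≠ 1) :
    1 - z ∈ Complex.slitPlane := by
  by_cases h_im : z.im = 0
  · refine Or.inl (sub_pos.2 (lt_of_le_of_ne ((Complex.re_le_norm z).trans hz) fun h_re ↦ ?_))
    exact hz1 (Complex.ext h_re h_im)
  · exact Or.inr (by simpa using h_im)

theorem norm_sub_le_two_mul_norm_sub_smul {E : Type*} [SeminormedAddCommGroup E] [NormedSpace ℝ E]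
    {x y : E} (hyx : ‖y‖ ≤ ‖x‖) {r : ℝ} (hr : r ∈ Icc 0 1) : ‖x - y‖ ≤ 2 * ‖x - r • y‖ := by
  calc ‖x - y‖ = ‖(x - r • y) - (1 - r) • y‖ := by congr 1; module
    _ ≤ ‖x - r • y‖ + (1 - r) * ‖y‖ := by
      grw [norm_sub_le, norm_smul, Real.norm_of_nonneg (sub_nonneg.2 hr.2)]
    _ ≤ ‖x - r • y‖ + (‖x‖ - ‖r • y‖) := by
      rw [norm_smul, Real.norm_of_nonneg hr.1]
      linarith
    _ ≤ 2 * ‖x - r • y‖ := by linarith [norm_sub_norm_le x (r • y)]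

theorem norm_log_one_sub_smul_sq_le {z : ℂ} (hz : ‖z‖ ≤ 1) (hz1 : z ≠ 1) {r : ℝ}
    (hr : r ∈ Icc 0 1) :
    ‖Complex.log (1 - r • z)‖ ^ 2 ≤ Real.log (‖1 - z‖ / 2) ^ 2 + (Real.log 2 ^ 2 + π ^ 2) := by
  set w := 1 - r • z
  have h_pos : 0 < ‖1 - z‖ / 2 := half_pos (norm_pos_iff.2 (sub_ne_zero.2 hz1.symm))
  have h_lower : ‖1 - z‖ / 2 ≤ ‖w‖ := by
    linarith [norm_sub_le_two_mul_norm_sub_smul (x := (1 : ℂ)) (by simpa using hz) hr]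
  have h_upper : ‖w‖ ≤ 2 := by
    have : ‖r • z‖ ≤ 1 := by
      rw [norm_smul, Real.norm_of_nonneg hr.1]
      exact mul_le_one₀ hr.2 (norm_nonneg z) hz
    linarith [norm_sub_le 1 (r • z), norm_one (α := ℂ)]
  have h_re : Real.log ‖w‖ ^ 2 ≤ Real.log (‖1 - z‖ / 2) ^ 2 + Real.log 2 ^ 2 := by
    have h₁ := Real.log_le_log h_pos h_lower
    have h₂ := Real.log_le_log (h_pos.trans_le h_lower) h_upper
    rcases le_total 0 (Real.log ‖w‖) with h | h <;> nlinarith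
  have h_im : w.arg ^ 2 ≤ π ^ 2 := sq_le_sq.2 ((Complex.abs_arg_le_pi w).trans (le_abs_self π))
  rw [Complex.sq_norm, Complex.normSq_apply, Complex.log_re, Complex.log_im]
  linarith

theorem circleIntegrable_log_norm_one_sub_div_two_pow (n : ℕ) :
    CircleIntegrable (fun z ↦ Real.log (‖1 - z‖ / 2) ^ n) 0 1 := by
  have h_norm (θ : ℝ) : ‖1 - circleMap 0 1 θ‖ / 2 = |Real.sin (2⁻¹ * θ)| := by
    have h_double := one_sub_circleMap_two_mul (2⁻¹ * θ)
    rw [mul_inv_cancel_left₀ two_ne_zero] at h_double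
    rw [h_double, norm_circleMap_zero, abs_mul, abs_two, mul_div_cancel_left₀ _ two_ne_zero]
  have h_scaled := (intervalIntegrable_log_sin_pow n 0 π).comp_mul_left (c := 2⁻¹)
  simpa only [CircleIntegrable, h_norm, Real.log_abs, zero_mul, div_inv_eq_mul, mul_comm π] using
    h_scaled

theorem ae_circleMap_ne (c w : ℂ) {R : ℝ} (hR : R ≠ 0) : ∀ᵐ θ, circleMap c R θ ≠ w :=
  ((countable_singleton w).preimage_circleMap c hR).ae_notMem volume

theorem norm_log_one_sub_circleMap_sq_le {r θ : ℝ} (hr : r ∈ Icc 0 1) (hθ : circleMap 0 1 θ ≠ 1) :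
    ‖Complex.log (1 - circleMap 0 r θ) ^ 2‖ ≤
      Real.log (‖1 - circleMap 0 1 θ‖ / 2) ^ 2 + (Real.log 2 ^ 2 + π ^ 2) := by
  have h_smul : circleMap 0 r θ = r • circleMap 0 1 θ := by simp [circleMap]
  rw [norm_pow, h_smul]
  exact norm_log_one_sub_smul_sq_le (by simp) hθ hr

theorem circleIntegrable_log_one_sub_sq :
    CircleIntegrable (fun z ↦ Complex.log (1 - z) ^ 2) 0 1 := by
  have h_meas : Measurable fun θ ↦ Complex.log (1 - circleMap 0 1 θ) ^ 2 := by
    have := (continuous_circleMap 0 1).measurable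
    fun_prop
  refine ((circleIntegrable_log_norm_one_sub_div_two_pow 2).add
    (circleIntegrable_const (Real.log 2 ^ 2 + π ^ 2) 0 1)).mono_fun'
    h_meas.aestronglyMeasurable ?_
  filter_upwards [ae_restrict_of_ae (ae_circleMap_ne 0 1 one_ne_zero)] with θ hθ
  exact norm_log_one_sub_circleMap_sq_le (right_mem_Icc.2 zero_le_one) hθ

theorem differentiableAt_log_one_sub_sq {z : ℂ} (hz : ‖z‖ ≤ 1) (hz1 : z ≠ 1) :
    DifferentiableAt ℂ (fun z ↦ Complex.log (1 - z) ^ 2) z := by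
  have := one_sub_mem_slitPlane hz hz1
  fun_prop (disch := assumption)

theorem circleAverage_log_one_sub_sq :
    circleAverage (fun z ↦ Complex.log (1 - z) ^ 2) 0 1 = 0 := by
  have h_bound := (circleIntegrable_log_norm_one_sub_div_two_pow 2).add
    (circleIntegrable_const (Real.log 2 ^ 2 + π ^ 2) 0 1)
  have h_mean := circleAverage_eq_of_dominated (c := 0) (f := fun z ↦ Complex.log (1 - z) ^ 2)
    one_pos ?_ h_bound ?_ ?_
  · simpa using h_mean
  · intro z hz
    have hz : ‖z‖ < 1 := by simpa using hz
    exact (differentiableAt_log_one_sub_sq hz.le (by rintro rfl; simp at hz)).differentiableWithinAt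
  · filter_upwards [Ioo_mem_nhdsLT one_pos] with r hr
    filter_upwards [ae_circleMap_ne 0 1 one_ne_zero] with θ hθ
    exact norm_log_one_sub_circleMap_sq_le (Ioo_subset_Icc_self hr) hθ
  · filter_upwards [ae_circleMap_ne 0 1 one_ne_zero] with θ hθ
    have h_circle : Continuous fun r ↦ circleMap 0 r θ := by fun_prop
    exact ((differentiableAt_log_one_sub_sq (by simp) hθ).continuousAt.tendsto.comp
      h_circle.continuousAt.tendsto).mono_left nhdsWithin_le_nhds

theorem intervalIntegrable_re_log_one_sub_circleMap_two_mul_sq :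
    IntervalIntegrable (fun x ↦ (Complex.log (1 - circleMap 0 1 (2 * x)) ^ 2).re) volume 0 π := by
  have h_scaled := IntervalIntegrable.comp_mul_left circleIntegrable_log_one_sub_sq (c := 2)
  rw [zero_div, mul_div_cancel_left₀ _ two_ne_zero] at h_scaled
  exact ⟨h_scaled.1.re, h_scaled.2.re⟩

theorem integral_re_log_one_sub_circleMap_two_mul_sq :
    ∫ x in 0..π, (Complex.log (1 - circleMap 0 1 (2 * x)) ^ 2).re = 0 := by
  have h_average := Complex.reCLM.circleAverage_comp_comm circleIntegrable_log_one_sub_sq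
  rw [circleAverage_log_one_sub_sq, map_zero, circleAverage_def,
    smul_eq_zero_iff_right (by positivity)] at h_average
  rw [intervalIntegral.integral_comp_mul_left
    (fun θ ↦ (Complex.log (1 - circleMap 0 1 θ) ^ 2).re) two_ne_zero, mul_zero]
  exact smul_eq_zero_of_right _ h_average

theorem intervalIntegrable_log_two_mul_sin_sq :
    IntervalIntegrable (fun x ↦ Real.log (2 * Real.sin x) ^ 2) volume 0 π := by
  have h_sq : IntervalIntegrable (fun x ↦ (x - π / 2) ^ 2) volume 0 π :=
    Continuous.intervalIntegrable (by fun_prop) 0 π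
  refine (intervalIntegrable_re_log_one_sub_circleMap_two_mul_sq.add h_sq).congr_uIoo fun x hx ↦ ?_
  rw [uIoo_of_le pi_pos.le] at hx
  simp only [re_log_one_sub_circleMap_two_mul_sq hx, sub_add_cancel]

theorem integral_log_two_mul_sin_sq :
    ∫ x in 0..π, Real.log (2 * Real.sin x) ^ 2 = π ^ 3 / 12 := by
  have h_sq_int : IntervalIntegrable (fun x ↦ (x - π / 2) ^ 2) volume 0 π :=
    Continuous.intervalIntegrable (by fun_prop) 0 π
  have h_diff : ∫ x in 0..π, (Real.log (2 * Real.sin x) ^ 2 - (x - π / 2) ^ 2) = 0 := by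
    refine Eq.trans ?_ integral_re_log_one_sub_circleMap_two_mul_sq
    refine intervalIntegral.integral_congr_Ioo_of_le pi_pos.le fun x hx ↦ ?_
    exact (re_log_one_sub_circleMap_two_mul_sq hx).symm
  rw [intervalIntegral.integral_sub intervalIntegrable_log_two_mul_sin_sq h_sq_int,
    sub_eq_zero] at h_diff
  rw [h_diff, intervalIntegral.integral_comp_sub_right (· ^ 2), integral_pow]
  push_cast
  ring

theorem integral_comp_sin_zero_pi {E : Type*} [NormedAddCommGroup E] [NormedSpace ℝ E] (f : ℝ → E)
    (hf : IntervalIntegrable (fun x ↦ f (Real.sin x)) volume 0 π) :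
    ∫ x in 0..π, f (Real.sin x) = (2 : ℝ) • ∫ x in 0..(π / 2), f (Real.sin x) := by
  have h_mem : π / 2 ∈ uIcc 0 π := by
    rw [uIcc_of_le pi_pos.le]
    exact ⟨by positivity, half_le_self pi_pos.le⟩
  have h_reflect : ∫ x in (π / 2)..π, f (Real.sin x) = ∫ x in 0..(π / 2), f (Real.sin x) := by
    have h_sub := intervalIntegral.integral_comp_sub_left (a := π / 2) (b := π)
      (fun x ↦ f (Real.sin x)) π
    simpa only [Real.sin_pi_sub, sub_self, sub_half] using h_sub
  rw [← intervalIntegral.integral_add_adjacent_intervals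
    (hf.mono_set (uIcc_subset_uIcc_left h_mem)) (hf.mono_set (uIcc_subset_uIcc_right h_mem)),
    h_reflect, two_smul]

theorem integral_log_sq_two_sin :
    ∫ u in (0:ℝ)..(1/2), (Real.log (2 * Real.sin (π * u)))^2 = π^2 / 24 := by
  have h_half : π ^ 3 / 12 = 2 * ∫ x in 0..(π / 2), Real.log (2 * Real.sin x) ^ 2 := by
    rw [← integral_log_two_mul_sin_sq]
    exact integral_comp_sin_zero_pi (fun y ↦ Real.log (2 * y) ^ 2)
      intervalIntegrable_log_two_mul_sin_sq
  have h_scale : π * ∫ u in (0 : ℝ)..(1 / 2), Real.log (2 * Real.sin (π * u)) ^ 2 =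
      ∫ x in 0..(π / 2), Real.log (2 * Real.sin x) ^ 2 := by
    rw [intervalIntegral.mul_integral_comp_mul_left (f := fun x ↦ Real.log (2 * Real.sin x) ^ 2),
      mul_zero, mul_one_div]
  apply mul_left_cancel₀ pi_ne_zero
  rw [h_scale]
  linarith
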